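/- Single transfer lemma: In the canonical game, for any formula B^T_Y φ ∈ Φ and any two adjacent canonical states w' = T_0, F_0, …, b_{n−1}, T_{n−1}, F_{n−1} and w = T_0, F_0, …, b_{n−1}, T_{n−1}, F_{n−1}, X_n, b_n, T_n, F_n, if Y ⊆ X_n, then B^T_Y φ ∈ F(w') if and only if B^T_Y φ ∈ F(w). -/

import Mathlib

/- Language: formulas over atomic propositions P, data variables V, actors 𝒜 = A.
   `bel T X φ` is B^T_X φ ; `str C T X φ` is [C]^T_X φ. -/
inductive Formula (P V A : Type) : Type
  | atom : P → Formula P V A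
  | neg : Formula P V A → Formula P V A
  | imp : Formula P V A → Formula P V A → Formula P V A
  | bel : Set V → Set V → Formula P V A → Formula P V A
  | str : Set A → Set V → Set V → Formula P V A → Formula P V A

variable {P V A : Type}

/-- Propositional tautologies: true under every valuation respecting ¬ and →. -/
def Tautology (φ : Formula P V A) : Prop :=
  ∀ v : Formula P V A → Prop,
    (∀ ψ, v (Formula.neg ψ) ↔ ¬ v ψ) →
    (∀ ψ χ, v (Formula.imp ψ χ) ↔ (v ψ → v χ)) →
    v φ

/-- Theorems of the logical system of doxastic strategies. -/
inductive Thm : Formula P V A → Prop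
  | taut {φ : Formula P V A} : Tautology φ → Thm φ
  | truth {X : Set V} {φ : Formula P V A} :
      Thm (Formula.imp (Formula.bel ∅ X φ) φ)
  | negIntro {T X : Set V} {φ : Formula P V A} :
      Thm (Formula.imp (Formula.neg (Formula.bel T X φ))
        (Formula.bel ∅ X (Formula.neg (Formula.bel T X φ))))
  | distrib {T X : Set V} {φ ψ : Formula P V A} :
      Thm (Formula.imp (Formula.bel T X (Formula.imp φ ψ))
        (Formula.imp (Formula.bel T X φ) (Formula.bel T X ψ)))
  | trust {T X Y : Set V} {φ : Formula P V A} :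
      Thm (Formula.bel T X (Formula.imp (Formula.bel T Y φ) φ))
  | monoB {T T' X X' : Set V} {φ : Formula P V A} :
      T ⊆ T' → X ⊆ X' →
      Thm (Formula.imp (Formula.bel T X φ) (Formula.bel T' X' φ))
  | monoS {C C' : Set A} {T T' X X' : Set V} {φ : Formula P V A} :
      T ⊆ T' → X ⊆ X' → C ⊆ C' →
      Thm (Formula.imp (Formula.str C T X φ) (Formula.str C' T' X' φ))
  | coop {C D : Set A} {T X : Set V} {φ ψ : Formula P V A} :
      C ∩ D = ∅ →
      Thm (Formula.imp (Formula.str C T X (Formula.imp φ ψ))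
        (Formula.imp (Formula.str D T X φ) (Formula.str (C ∪ D) T X ψ)))
  | strIntro₁ {C : Set A} {T X : Set V} {φ : Formula P V A} :
      Thm (Formula.imp (Formula.str C T X φ) (Formula.bel T X (Formula.str C T X φ)))
  | strIntro₂ {C : Set A} {T X : Set V} {φ : Formula P V A} :
      Thm (Formula.imp (Formula.bel T X (Formula.str C T X φ)) (Formula.str C T X φ))
  | unavoid {T X Y : Set V} {φ : Formula P V A} :
      Thm (Formula.imp (Formula.bel T X (Formula.str ∅ T Y φ)) (Formula.str ∅ T X φ))
  | pub {T : Set V} {φ : Formula P V A} :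
      Thm (Formula.imp (Formula.bel T ∅ φ) (Formula.str ∅ T ∅ φ))
  | mp {φ ψ : Formula P V A} : Thm (Formula.imp φ ψ) → Thm φ → Thm ψ
  | nec {φ : Formula P V A} : Thm φ → Thm (Formula.bel ∅ ∅ φ)

/-- `Deduces F φ`: φ is derivable from F together with the theorems using only Modus Ponens. -/
inductive Deduces (F : Set (Formula P V A)) : Formula P V A → Prop
  | thm {φ : Formula P V A} : Thm φ → Deduces F φ
  | mem {φ : Formula P V A} : φ ∈ F → Deduces F φ
  | mp {φ ψ : Formula P V A} :
      Deduces F (Formula.imp φ ψ) → Deduces F φ → Deduces F ψ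

def Consistent (F : Set (Formula P V A)) : Prop :=
  ¬ ∃ φ : Formula P V A, Deduces F φ ∧ Deduces F (Formula.neg φ)

def MaximalConsistent (F : Set (Formula P V A)) : Prop :=
  Consistent F ∧ ∀ G : Set (Formula P V A), Consistent G → F ⊆ G → F = G

/-- A game. -/
structure Game (P V A : Type) : Type 1 where
  W : Type
  sim : V → W → W → Prop
  sim_equiv : ∀ x : V, Equivalence (sim x)
  trust : W → Set V
  Δ : Type
  delta_nonempty : Nonempty Δ
  M : W → (A → Δ) → W → Prop
  pi : P → Set W

/-- `w ∼_X u`. -/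
def Game.simSet (G : Game P V A) (X : Set V) (w u : G.W) : Prop :=
  ∀ x ∈ X, G.sim x w u

/-- The satisfaction relation `w ⊨ φ` (as `Sat G φ w`). -/
def Sat (G : Game P V A) : Formula P V A → G.W → Prop
  | Formula.atom p, w => w ∈ G.pi p
  | Formula.neg φ, w => ¬ Sat G φ w
  | Formula.imp φ ψ, w => Sat G φ w → Sat G ψ w
  | Formula.bel T X φ, w =>
      ∀ u : G.W, G.simSet X w u → T ⊆ G.trust u → Sat G φ u
  | Formula.str C T X φ, w =>
      ∃ s : {a : A // a ∈ C} → G.Δ,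
        ∀ (u v : G.W) (δ : A → G.Δ),
          G.simSet X w u → T ⊆ G.trust u →
          (∀ (a : A) (h : a ∈ C), s ⟨a, h⟩ = δ a) →
          G.M u δ v → T ⊆ G.trust v → Sat G φ v

/- ===================== Canonical game ===================== -/

/-- One block `X_i, b_i, T_i, F_i` of a canonical state. -/
structure Block (P V A B : Type) where
  X : Set V
  b : B
  T : Set V
  F : Set (Formula P V A)

variable {B : Type}

/-- `F(w)`: the last set of formulae of the sequence (or `F0` for the root). -/
def cF (F0 : Set (Formula P V A)) (l : List (Block P V A B)) : Set (Formula P V A) :=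
  l.getLast?.elim F0 Block.F

/-- `𝒯_w = T(w)`: the last dataset of the sequence (or `T0` for the root). -/
def cTrust (T0 : Set V) (l : List (Block P V A B)) : Set V :=
  l.getLast?.elim T0 Block.T

/-- Membership of a sequence in the set of canonical states `W`. -/
inductive IsState (T0 : Set V) (F0 : Set (Formula P V A)) :
    List (Block P V A B) → Prop
  | nil :
      (∀ (Y : Set V) (ψ : Formula P V A),
        Formula.imp (Formula.bel T0 Y ψ) ψ ∈ F0) →
      IsState T0 F0 []
  | snoc {l : List (Block P V A B)} {bl : Block P V A B} :
      IsState T0 F0 l →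
      MaximalConsistent bl.F →
      (∀ φ : Formula P V A, Formula.bel ∅ bl.X φ ∈ cF F0 l → φ ∈ bl.F) →
      (∀ (Y : Set V) (ψ : Formula P V A),
        Formula.imp (Formula.bel bl.T Y ψ) ψ ∈ bl.F) →
      IsState T0 F0 (l ++ [bl])

/-- The canonical states. -/
def CState (T0 : Set V) (F0 : Set (Formula P V A)) (B : Type) : Type :=
  {l : List (Block P V A B) // IsState T0 F0 l}

attribute [local instance] Classical.propDecidable

/-- Length of the longest common prefix of two sequences. -/
noncomputable def cpl {α : Type} : List α → List α → Nat
  | a :: as, b :: bs => if a = b then cpl as bs + 1 else 0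
  | _, _ => 0

/-- The blocks labelling the edges on the unique simple path between two
nodes of the canonical tree. -/
noncomputable def pathBlocks (w u : List (Block P V A B)) : List (Block P V A B) :=
  w.drop (cpl w u) ++ u.drop (cpl w u)

/-- `w ∼_x u` in the canonical game: every edge along the unique simple path
between `w` and `u` is labelled with `x`. -/
def csimVar (x : V) (w u : List (Block P V A B)) : Prop :=
  ∀ bl ∈ pathBlocks w u, x ∈ bl.X

/-- `w ∼_X u` in the canonical game. -/
def csim (X : Set V) (w u : List (Block P V A B)) : Prop :=
  ∀ x ∈ X, csimVar x w u

/-- The canonical mechanism `M`. -/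
def Mech (T0 : Set V) (F0 : Set (Formula P V A))
    (w : CState T0 F0 B) (δ : A → Formula P V A × CState T0 F0 B)
    (v : CState T0 F0 B) : Prop :=
  ∀ (C : Set A) (T X : Set V) (φ : Formula P V A),
    Formula.str C T X φ ∈ cF F0 w.1 →
    (∀ a ∈ C, (δ a).1 = φ) →
    (∀ a ∈ C, csim X w.1 (δ a).2.1) →
    T ⊆ cTrust T0 w.1 → T ⊆ cTrust T0 v.1 →
    φ ∈ cF F0 v.1

/-- Satisfaction `w ⊨ φ` on the canonical game (as `CSat T0 F0 φ w`). -/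
def CSat (T0 : Set V) (F0 : Set (Formula P V A)) :
    Formula P V A → CState T0 F0 B → Prop
  | Formula.atom p, w => Formula.atom p ∈ cF F0 w.1
  | Formula.neg φ, w => ¬ CSat T0 F0 φ w
  | Formula.imp φ ψ, w => CSat T0 F0 φ w → CSat T0 F0 ψ w
  | Formula.bel T X φ, w =>
      ∀ u : CState T0 F0 B, csim X w.1 u.1 → T ⊆ cTrust T0 u.1 → CSat T0 F0 φ u
  | Formula.str C T X φ, w =>
      ∃ s : {a : A // a ∈ C} → Formula P V A × CState T0 F0 B,
        ∀ (u v : CState T0 F0 B) (δ : A → Formula P V A × CState T0 F0 B),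
          csim X w.1 u.1 → T ⊆ cTrust T0 u.1 →
          (∀ (a : A) (h : a ∈ C), s ⟨a, h⟩ = δ a) →
          Mech T0 F0 u δ v → T ⊆ cTrust T0 v.1 → CSat T0 F0 φ v

/- ===================== Harmony ===================== -/

/-- Conjunction definable from ¬ and →. -/
def fand (φ ψ : Formula P V A) : Formula P V A :=
  Formula.neg (Formula.imp φ (Formula.neg ψ))

/-- A canonical tautology (verum). -/
noncomputable def verum (P V A : Type) [Nonempty (Formula P V A)] : Formula P V A :=
  Formula.imp (Classical.arbitrary (Formula P V A)) (Classical.arbitrary (Formula P V A))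

/-- Conjunction of a finite list of formulae. -/
noncomputable def conjList [Nonempty (Formula P V A)] :
    List (Formula P V A) → Formula P V A
  | [] => verum P V A
  | φ :: l => fand φ (conjList l)

/-- The pair `(F, G)` is in `T`-harmony: `F ⊬ [∅]^T_V ¬⋀G'` for each finite `G' ⊆ G`. -/
def THarmony [Nonempty (Formula P V A)] (T : Set V)
    (F G : Set (Formula P V A)) : Prop :=
  ∀ l : List (Formula P V A), (∀ ψ ∈ l, ψ ∈ G) →
    ¬ Deduces F (Formula.str ∅ T (Set.univ : Set V) (Formula.neg (conjList l)))

/-!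
Belief with empty trust, `B^∅_Y`, is an S5 modality: Truth and Negative Introspection yield
`B^T_Y φ → B^∅_Y B^T_Y φ`, the counterpart of the axiom `¬B^T_Y φ → B^∅_Y ¬B^T_Y φ`. Hence a maximal
consistent set contains `B^∅_Y` applied to whichever of `B^T_Y φ` and its negation it contains. The
edge condition sends everything under `B^∅_{X_n}` to the child state, and by Monotonicity also
everything under `B^∅_Y` with `Y ⊆ X_n`, so parent and child agree on `B^T_Y φ`.
-/

section

open Formula

variable {T0 T X Y : Set V} {F0 F G : Set (Formula P V A)} {φ ψ χ : Formula P V A}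
  {l : List (Block P V A B)} {bl : Block P V A B}

namespace Tautology

theorem imp_self : Tautology (imp φ φ) := fun v _ hi => by
  simp only [hi]; tauto

theorem imp_of_conclusion : Tautology (imp ψ (imp φ ψ)) := fun v _ hi => by
  simp only [hi]; tauto

theorem imp_distrib :
    Tautology (imp (imp φ (imp ψ χ)) (imp (imp φ ψ) (imp φ χ))) := fun v _ hi => by
  simp only [hi]; tauto

theorem imp_trans :
    Tautology (imp (imp φ ψ) (imp (imp ψ χ) (imp φ χ))) := fun v _ hi => by
  simp only [hi]; tauto

theorem imp_neg_swap : Tautology (imp (imp φ (neg ψ)) (imp ψ (neg φ))) := fun v hn hi => by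
  simp only [hi, hn]; tauto

theorem neg_imp_swap : Tautology (imp (imp (neg φ) ψ) (imp (neg ψ) φ)) := fun v hn hi => by
  simp only [hi, hn]; tauto

theorem reductio :
    Tautology (imp (imp φ ψ) (imp (imp φ (neg ψ)) (neg φ))) := fun v hn hi => by
  simp only [hi, hn]; tauto

end Tautology

namespace Thm

theorem imp_trans (hφψ : Thm (imp φ ψ)) (hψχ : Thm (imp ψ χ)) : Thm (imp φ χ) :=
  .mp (.mp (.taut .imp_trans) hφψ) hψχ

theorem imp_neg_swap (h : Thm (imp φ (neg ψ))) : Thm (imp ψ (neg φ)) :=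
  .mp (.taut .imp_neg_swap) h

theorem neg_imp_swap (h : Thm (imp (neg φ) ψ)) : Thm (imp (neg ψ) φ) :=
  .mp (.taut .neg_imp_swap) h

theorem necessitation (T X : Set V) (h : Thm φ) : Thm (bel T X φ) :=
  .mp (.monoB (Set.empty_subset T) (Set.empty_subset X)) (.nec h)

theorem bel_imp_bel (T X : Set V) (h : Thm (imp φ ψ)) :
    Thm (imp (bel T X φ) (bel T X ψ)) :=
  .mp .distrib (h.necessitation T X)

theorem posIntro : Thm (imp (bel T X φ) (bel ∅ X (bel T X φ))) := by
  have compatible_of_bel :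
      Thm (imp (bel T X φ) (neg (bel ∅ X (neg (bel T X φ))))) :=
    truth.imp_neg_swap
  have bel_of_compatible :
      Thm (imp (neg (bel ∅ X (neg (bel T X φ)))) (bel T X φ)) :=
    negIntro.neg_imp_swap
  exact compatible_of_bel.imp_trans (negIntro.imp_trans (bel_of_compatible.bel_imp_bel ∅ X))

end Thm

namespace Deduces

theorem trans (hG : Deduces G ψ) (hF : ∀ φ ∈ G, Deduces F φ) : Deduces F ψ := by
  induction hG with
  | thm hψ => exact .thm hψ
  | mem hψ => exact hF _ hψ
  | mp _ _ ih_imp ih => exact .mp ih_imp ih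

theorem imp_of_conclusion (φ : Formula P V A) (h : Deduces F ψ) : Deduces F (imp φ ψ) :=
  .mp (.thm (.taut .imp_of_conclusion)) h

theorem deduction (h : Deduces (insert φ F) ψ) : Deduces F (imp φ ψ) := by
  induction h with
  | thm hψ => exact imp_of_conclusion φ (.thm hψ)
  | mem hψ =>
    obtain rfl | hψ := hψ
    · exact .thm (.taut .imp_self)
    · exact imp_of_conclusion φ (.mem hψ)
  | mp _ _ ih_imp ih => exact .mp (.mp (.thm (.taut .imp_distrib)) ih_imp) ih

theorem neg_of_not_consistent_insert (h : ¬ Consistent (insert φ F)) : Deduces F (neg φ) := by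
  obtain ⟨ψ, hψ, hnψ⟩ := not_not.mp h
  exact .mp (.mp (.thm (.taut .reductio)) hψ.deduction) hnψ.deduction

end Deduces

theorem Consistent.insert_of_deduces (hF : Consistent F) (h : Deduces F φ) :
    Consistent (insert φ F) := by
  have deduces_of_mem_insert : ∀ χ ∈ insert φ F, Deduces F χ :=
    Set.forall_mem_insert.mpr ⟨h, fun _ => .mem⟩
  rintro ⟨ψ, hψ, hnψ⟩
  exact hF ⟨ψ, hψ.trans deduces_of_mem_insert, hnψ.trans deduces_of_mem_insert⟩

theorem Consistent.notMem_of_neg_mem (hF : Consistent F) (h : neg φ ∈ F) : φ ∉ F :=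
  fun hφ => hF ⟨φ, .mem hφ, .mem h⟩

namespace MaximalConsistent

theorem mem_of_consistent_insert (hF : MaximalConsistent F) (h : Consistent (insert φ F)) :
    φ ∈ F := by
  rw [hF.2 _ h (Set.subset_insert φ F)]
  exact Set.mem_insert φ F

theorem mem_of_deduces (hF : MaximalConsistent F) (h : Deduces F φ) : φ ∈ F :=
  hF.mem_of_consistent_insert (hF.1.insert_of_deduces h)

theorem mem_of_thm_imp (hF : MaximalConsistent F) (h : Thm (imp φ ψ)) (hφ : φ ∈ F) : ψ ∈ F :=
  hF.mem_of_deduces (.mp (.thm h) (.mem hφ))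

theorem neg_mem_of_notMem (hF : MaximalConsistent F) (h : φ ∉ F) : neg φ ∈ F :=
  hF.mem_of_deduces (.neg_of_not_consistent_insert (mt hF.mem_of_consistent_insert h))

end MaximalConsistent

/-- The accessibility relation of the modality `B^∅_X` between sets of formulae. It is the condition
`{φ | B^∅_X φ ∈ F} ⊆ G` imposed on the edges of the canonical tree. -/
def Accessible (X : Set V) (F G : Set (Formula P V A)) : Prop :=
  ∀ φ, bel ∅ X φ ∈ F → φ ∈ G

theorem Accessible.of_subset (hF : MaximalConsistent F) (hYX : Y ⊆ X) (h : Accessible X F G) :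
    Accessible Y F G :=
  fun φ hφ => h φ (hF.mem_of_thm_imp (.monoB subset_rfl hYX) hφ)

theorem Accessible.bel_mem_iff (hF : MaximalConsistent F) (hG : Consistent G)
    (h : Accessible Y F G) : bel T Y φ ∈ F ↔ bel T Y φ ∈ G := by
  refine ⟨fun hφ => h _ (hF.mem_of_thm_imp .posIntro hφ), fun hφ => ?_⟩
  by_contra hnφ
  have neg_mem : neg (bel T Y φ) ∈ G :=
    h _ (hF.mem_of_thm_imp .negIntro (hF.neg_mem_of_notMem hnφ))
  exact hG.notMem_of_neg_mem neg_mem hφ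

theorem cF_append_singleton : cF F0 (l ++ [bl]) = bl.F := by
  simp [cF]

theorem IsState.maximalConsistent_cF (hF0 : MaximalConsistent F0) (h : IsState T0 F0 l) :
    MaximalConsistent (cF F0 l) := by
  cases h with
  | nil _ => exact hF0
  | snoc _ hF _ _ => rwa [cF_append_singleton]

theorem IsState.accessible_cF (h : IsState T0 F0 (l ++ [bl])) :
    Accessible bl.X (cF F0 l) (cF F0 (l ++ [bl])) := by
  generalize hm : l ++ [bl] = m at h
  cases h with
  | nil _ => simp at hm
  | snoc _ _ hacc _ =>
    obtain ⟨rfl, rfl⟩ := List.append_singleton_inj.mp hm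
    rwa [cF_append_singleton]

theorem single_transfer_general (hF : MaximalConsistent F) (hG : Consistent G)
    (h : Accessible X F G) (hYX : Y ⊆ X) : bel T Y φ ∈ F ↔ bel T Y φ ∈ G :=
  (h.of_subset hF hYX).bel_mem_iff hF hG

end

/-- Single transfer lemma: for adjacent canonical states
w' = T_0,F_0,…,T_{n-1},F_{n-1} and w = w', X_n, b_n, T_n, F_n, if Y ⊆ X_n then
B^T_Y φ ∈ F(w') iff B^T_Y φ ∈ F(w). -/
theorem single_transfer {P V A B : Type}
    (T0 : Set V) (F0 : Set (Formula P V A))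
    (hF0 : MaximalConsistent F0) (hB : Cardinal.mk A < Cardinal.mk B)
    (l : List (Block P V A B)) (bl : Block P V A B)
    (hw' : IsState T0 F0 l) (hw : IsState T0 F0 (l ++ [bl]))
    (T Y : Set V) (φ : Formula P V A) (hY : Y ⊆ bl.X) :
    Formula.bel T Y φ ∈ cF F0 l ↔ Formula.bel T Y φ ∈ cF F0 (l ++ [bl]) := by
  exact single_transfer_general (hw'.maximalConsistent_cF hF0) (hw.maximalConsistent_cF hF0).1
    hw.accessible_cF hY
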